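/- arXiv:2201.08895 — 2 statements merged into one kernel-verified Lean document; each statement's English description precedes it below -/
import Mathlib

section
/- Spectral Well-Ordering Theorem: for every k ∈ ℕ, the set kcnfs-σ-spectrum = {σ(φ) : φ a kCNF formula} is well-ordered by >, i.e., there is no infinite sequence x₀ < x₁ < x₂ < ⋯ of elements of kcnfs-σ-spectrum. -/
/-!
Write `σ` for the satisfaction probability. The proof is by induction on `k`; for `k = 0` only the
values `0` and `1` occur.

For the step, let `φ₀, φ₁, …` be `(k+1)`CNF formulas with `σ(φ₀) < σ(φ₁) < ⋯`. All but the first of these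
values are at least `ε = σ(φ₁) > 0`. Pairwise variable-disjoint clauses are satisfied independently, each with
probability at most `1 - 2^{-(k+1)}`, so a formula with `σ ≥ ε` cannot contain many of them.
Greedily collecting such clauses therefore yields a set of at most `m` variables, with `m` depending
only on `k` and `ε`, that meets every clause (`hitting_or_small`). Enlarge it to a set `V` of exactly
`m` variables. Fixing the values of the variables in `V` shortens every clause, so
`σ(φ) = 2^{-m} ∑_T σ(φ|_T)`, where `T` runs over the `2^m` assignments of `V` and each residual
formula `φ|_T` is a `k`CNF formula (`satProb_eq_sum_residualCnf`). By the induction hypothesis and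
Ramsey's theorem each of the `2^m` sequences of summands is non-increasing along a common
subsequence (`exists_antitone_subseq`), hence so is their sum, which is a contradiction.
-/

open Finset

open scoped Classical

/-- A literal is a propositional variable (a natural number) together with a sign. -/
abbrev PLit := ℕ × Bool

/-- A clause is a finite set of literals. -/
abbrev PClause := Finset PLit

/-- A CNF formula is a finite set of clauses. -/
abbrev PCnf := Finset PClause

/-- A clause is valid if it contains no variable together with its negation. -/
def clauseValid (c : PClause) : Prop := ∀ v : ℕ, ¬((v, true) ∈ c ∧ (v, false) ∈ c)

/-- The variables occurring in a clause. -/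
def clauseVars (c : PClause) : Finset ℕ := c.image Prod.fst

/-- A CNF formula is valid if all of its clauses are. -/
def cnfValid (φ : PCnf) : Prop := ∀ c ∈ φ, clauseValid c

/-- The variables occurring in a CNF formula. -/
def cnfVars (φ : PCnf) : Finset ℕ := φ.sup clauseVars

/-- `φ` is a `k`CNF formula: all clauses are valid and have at most `k` literals. -/
def IsKCnf (k : ℕ) (φ : PCnf) : Prop := cnfValid φ ∧ ∀ c ∈ φ, c.card ≤ k

/-- An assignment is represented by the finite set `S` of variables set to true;
`litSat S l` says that the literal `l` is made true. -/
def litSat (S : Finset ℕ) (l : PLit) : Prop := if l.2 then l.1 ∈ S else l.1 ∉ S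

/-- A clause is satisfied if it contains a literal made true. -/
def clauseSat (S : Finset ℕ) (c : PClause) : Prop := ∃ l ∈ c, litSat S l

/-- A CNF formula is satisfied if all of its clauses are. -/
def cnfSat (S : Finset ℕ) (φ : PCnf) : Prop := ∀ c ∈ φ, clauseSat S c

/-- The satisfaction probability `σ(φ)`: the fraction of assignments
`β : vars(φ) → {0,1}` (represented as subsets of `cnfVars φ`) satisfying `φ`. -/
noncomputable def satProb (φ : PCnf) : ℝ :=
  ((cnfVars φ).powerset.filter (fun S => cnfSat S φ)).card / 2 ^ (cnfVars φ).card

/-- The set of satisfaction probabilities of `k`CNF formulas. -/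
def kcnfSpectrum (k : ℕ) : Set ℝ := {x | ∃ φ : PCnf, IsKCnf k φ ∧ satProb φ = x}

/-- A packing: a set of pairwise variable-disjoint clauses. -/
def IsPacking (π : PCnf) : Prop :=
  ∀ c ∈ π, ∀ c' ∈ π, c ≠ c' → Disjoint (clauseVars c) (clauseVars c')

/-- A sunflower with core `c`. -/
def IsSunflower (ψ : PCnf) (c : PClause) : Prop :=
  (∀ e ∈ ψ, c ⊆ e) ∧
    ∀ e ∈ ψ, ∀ e' ∈ ψ, e ≠ e' → clauseVars e ∩ clauseVars e' = clauseVars c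

/-- The link of a clause `c` in `φ`: all superclauses of `c` in `φ`. -/
noncomputable def link (φ : PCnf) (c : PClause) : PCnf := φ.filter (fun e => c ⊆ e)

/-- The literal `l` is made true by the assignment `β : V → {0,1}` represented by `S ⊆ V`. -/
def litTrue (V S : Finset ℕ) (l : PLit) : Prop :=
  l.1 ∈ V ∧ (if l.2 then l.1 ∈ S else l.1 ∉ S)

/-- The literal `l` is made false by the assignment `β : V → {0,1}` represented by `S ⊆ V`. -/
def litFalse (V S : Finset ℕ) (l : PLit) : Prop :=
  l.1 ∈ V ∧ ¬(if l.2 then l.1 ∈ S else l.1 ∉ S)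

/-- The restriction `φ|_β` of `φ` to the assignment `β : V → {0,1}` represented by
`S ⊆ V`: remove every clause containing a literal made true by `β`, delete from the
remaining clauses all literals made false by `β`, and add the unit clause `{v}` for
each `v ∈ S` and the unit clause `{¬v}` for each `v ∈ V \ S`. -/
noncomputable def restrict (φ : PCnf) (V S : Finset ℕ) : PCnf :=
  ((φ.filter fun c => ¬ ∃ l ∈ c, litTrue V S l).image fun c =>
      c.filter fun l => ¬ litFalse V S l)
    ∪ S.image (fun v => ({(v, true)} : PClause))
    ∪ (V \ S).image (fun v => ({(v, false)} : PClause))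

/-! ### Satisfaction probability over a superset of the variables -/

/-- The probability that `φ` is satisfied by a uniformly random assignment of the variables
in `W`; all other variables are set to false. -/
noncomputable def probOn (W : Finset ℕ) (φ : PCnf) : ℝ :=
  (∑ S ∈ W.powerset, if cnfSat S φ then (1 : ℝ) else 0) / 2 ^ W.card

lemma satProb_eq_probOn (φ : PCnf) : satProb φ = probOn (cnfVars φ) φ := by
  simp [satProb, probOn]

lemma sum_powerset_union {V B : Finset ℕ} (h : Disjoint V B) (f : Finset ℕ → ℝ) :
    ∑ S ∈ (V ∪ B).powerset, f S = ∑ T ∈ V.powerset, ∑ U ∈ B.powerset, f (T ∪ U) := by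
  induction V using Finset.induction_on generalizing f with
  | empty => simp
  | insert a V ha ih =>
    rw [Finset.disjoint_insert_left] at h
    have hab : a ∉ V ∪ B := by simp [ha, h.1]
    rw [Finset.insert_union, Finset.sum_powerset_insert hab, Finset.sum_powerset_insert ha,
      ih h.2, ih h.2]
    simp [Finset.insert_union]

lemma mem_cnfVars {φ : PCnf} {c : PClause} {l : PLit} (hc : c ∈ φ) (hl : l ∈ c) :
    l.1 ∈ cnfVars φ :=
  Finset.le_sup (f := clauseVars) hc (Finset.mem_image_of_mem _ hl)

lemma cnfVars_subset {φ : PCnf} {W : Finset ℕ} :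
    cnfVars φ ⊆ W ↔ ∀ c ∈ φ, ∀ l ∈ c, l.1 ∈ W := by
  constructor
  · intro h c hc l hl
    exact h (mem_cnfVars hc hl)
  · intro h
    refine Finset.sup_le fun c hc v hv => ?_
    obtain ⟨l, hl, rfl⟩ := Finset.mem_image.1 hv
    exact h c hc l hl

lemma litSat_congr {S S' : Finset ℕ} {l : PLit} (h : l.1 ∈ S ↔ l.1 ∈ S') :
    litSat S l ↔ litSat S' l := by
  simp [litSat, h]

lemma cnfSat_congr {S S' : Finset ℕ} {φ : PCnf} (h : ∀ v ∈ cnfVars φ, v ∈ S ↔ v ∈ S') :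
    cnfSat S φ ↔ cnfSat S' φ := by
  refine forall₂_congr fun c hc => exists_congr fun l => and_congr_right fun hl => ?_
  exact litSat_congr (h _ (mem_cnfVars hc hl))

lemma probOn_union_right {V B : Finset ℕ} (h : Disjoint V B) {φ : PCnf} (hφ : cnfVars φ ⊆ V) :
    probOn (V ∪ B) φ = probOn V φ := by
  have key : ∀ T ∈ V.powerset, ∀ U ∈ B.powerset,
      (if cnfSat (T ∪ U) φ then (1 : ℝ) else 0) = if cnfSat T φ then 1 else 0 := by
    intro T _ U hU
    have : cnfSat (T ∪ U) φ ↔ cnfSat T φ := by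
      refine cnfSat_congr fun v hv => ?_
      have : v ∉ U := fun hvU =>
        Finset.disjoint_left.1 h (hφ hv) (Finset.mem_powerset.1 hU hvU)
      simp [this]
    simp [this]
  unfold probOn
  rw [sum_powerset_union h, Finset.sum_congr rfl fun T hT => Finset.sum_congr rfl (key T hT),
    Finset.card_union_of_disjoint h, pow_add]
  simp only [Finset.sum_const, Finset.card_powerset, nsmul_eq_mul, ← Finset.mul_sum]
  push_cast
  field_simp

lemma probOn_eq_satProb {W : Finset ℕ} {φ : PCnf} (h : cnfVars φ ⊆ W) :
    probOn W φ = satProb φ := by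
  rw [satProb_eq_probOn, ← probOn_union_right (Finset.disjoint_sdiff (s := cnfVars φ) (t := W))
    subset_rfl, Finset.union_sdiff_of_subset h]

lemma satProb_nonneg (φ : PCnf) : 0 ≤ satProb φ := by
  unfold satProb; positivity

lemma satProb_anti {ψ φ : PCnf} (h : ψ ⊆ φ) : satProb φ ≤ satProb ψ := by
  have hv : cnfVars ψ ⊆ cnfVars φ := Finset.sup_mono h
  rw [← probOn_eq_satProb hv, satProb_eq_probOn φ]
  unfold probOn
  gcongr with S hS
  split_ifs with h1 h2
  · exact le_rfl
  · exact absurd (fun c hc => h1 c (h hc)) h2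
  · exact zero_le_one
  · exact le_rfl

lemma cnfVars_insert (c : PClause) (ψ : PCnf) :
    cnfVars (insert c ψ) = clauseVars c ∪ cnfVars ψ := by
  simp [cnfVars]

/-! ### Variable-disjoint clauses -/

/-- A clause `c` has at least one falsifying assignment on its own variables, which costs a factor
`1 - 2^{-|c|}`; the variables of `ψ` are independent of those of `c`. -/
lemma satProb_insert_le {c : PClause} {ψ : PCnf} {k : ℕ} (hc : clauseValid c) (hk : c.card ≤ k)
    (h : Disjoint (clauseVars c) (cnfVars ψ)) :
    satProb (insert c ψ) ≤ (1 - (1 / 2 : ℝ) ^ k) * satProb ψ := by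
  set V := clauseVars c with hV
  set B := cnfVars ψ with hB
  -- the assignment falsifying every literal of `c`
  set F : Finset ℕ := V.filter fun v => (v, false) ∈ c with hF
  have hFV : F ∈ V.powerset := Finset.mem_powerset.2 (Finset.filter_subset _ _)
  have hVk : V.card ≤ k := Finset.card_image_le.trans hk
  have hfalse : ¬ clauseSat F c := by
    rintro ⟨⟨v, b⟩, hl, hs⟩
    have hvV : v ∈ V := Finset.mem_image_of_mem Prod.fst hl
    cases b
    · simp [litSat, hF, hvV, hl] at hs
    · simp only [litSat, hF, if_true, Finset.mem_filter] at hs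
      exact hc v ⟨hl, hs.2⟩
  have key : ∀ T ∈ V.powerset, ∀ U ∈ B.powerset,
      (if cnfSat (T ∪ U) (insert c ψ) then (1 : ℝ) else 0)
        ≤ (if T = F then 0 else 1) * if cnfSat U ψ then 1 else 0 := by
    intro T hT U hU
    rw [Finset.mem_powerset] at hT hU
    by_cases hsat : cnfSat (T ∪ U) (insert c ψ)
    · have h1 : cnfSat U ψ := by
        refine (cnfSat_congr fun v hv => ?_).1
          fun d hd => hsat d (Finset.mem_insert_of_mem hd)
        have : v ∉ T := fun hvT => Finset.disjoint_left.1 h (hT hvT) hv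
        simp [this]
      have h2 : T ≠ F := by
        rintro rfl
        obtain ⟨l, hl, hs⟩ := hsat c (Finset.mem_insert_self _ _)
        refine hfalse ⟨l, hl, (litSat_congr ?_).1 hs⟩
        have hlV : l.1 ∈ V := Finset.mem_image_of_mem Prod.fst hl
        have : l.1 ∉ U := fun hlU => Finset.disjoint_left.1 h hlV (hU hlU)
        simp [this]
      simp [hsat, h1, h2]
    · rw [if_neg hsat]
      positivity
  have hsum : ∑ T ∈ V.powerset, (if T = F then (0 : ℝ) else 1) = 2 ^ V.card - 1 := by
    have : ∀ T : Finset ℕ, (if T = F then (0 : ℝ) else 1) = 1 - if T = F then 1 else 0 := by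
      intro T; split_ifs <;> simp
    simp only [this, Finset.sum_sub_distrib, Finset.sum_ite_eq', hFV, if_true]
    simp [Finset.card_powerset]
  have hle : probOn (V ∪ B) (insert c ψ) ≤ (1 - (1 / 2 : ℝ) ^ V.card) * probOn B ψ := by
    unfold probOn
    rw [sum_powerset_union h, Finset.card_union_of_disjoint h, pow_add]
    calc _ ≤ (∑ T ∈ V.powerset, ∑ U ∈ B.powerset,
          (if T = F then (0 : ℝ) else 1) * if cnfSat U ψ then 1 else 0)
            / (2 ^ V.card * 2 ^ B.card) := by
          gcongr with T hT U hU
          exact key T hT U hU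
      _ = _ := by
          rw [← Finset.sum_mul_sum, hsum, one_div, inv_pow]
          field_simp
  rw [satProb_eq_probOn, cnfVars_insert, satProb_eq_probOn ψ]
  refine hle.trans ?_
  have hpow : (1 / 2 : ℝ) ^ k ≤ (1 / 2 : ℝ) ^ V.card :=
    pow_le_pow_of_le_one (by norm_num) (by norm_num) hVk
  have : 0 ≤ probOn B ψ := by rw [hB, ← satProb_eq_probOn]; exact satProb_nonneg ψ
  gcongr

/-- Either few variables meet all clauses of `φ`, or `φ` contains `p` pairwise
variable-disjoint clauses and is therefore satisfied with small probability. -/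
lemma hitting_or_small {k : ℕ} {φ : PCnf} (hφ : IsKCnf k φ) (p : ℕ) :
    (∃ V : Finset ℕ, V.card ≤ k * p ∧ ∀ c ∈ φ, ¬ Disjoint (clauseVars c) V) ∨
      ∃ ψ ⊆ φ, (cnfVars ψ).card ≤ k * p ∧ satProb ψ ≤ (1 - (1 / 2 : ℝ) ^ k) ^ p := by
  have hr : 0 ≤ 1 - (1 / 2 : ℝ) ^ k :=
    sub_nonneg.2 (pow_le_one₀ (by norm_num) (by norm_num))
  induction p with
  | zero => exact .inr ⟨∅, by simp, by simp [cnfVars], by simp [satProb, cnfSat, cnfVars]⟩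
  | succ p ih =>
    rcases ih with ⟨V, hV, h⟩ | ⟨ψ, hψ, hcard, hprob⟩
    · exact .inl ⟨V, hV.trans (Nat.mul_le_mul_left _ p.le_succ), h⟩
    · by_cases hhit : ∀ c ∈ φ, ¬ Disjoint (clauseVars c) (cnfVars ψ)
      · exact .inl ⟨_, hcard.trans (Nat.mul_le_mul_left _ p.le_succ), hhit⟩
      · push Not at hhit
        obtain ⟨c, hc, hdis⟩ := hhit
        refine .inr ⟨insert c ψ, Finset.insert_subset hc hψ, ?_, ?_⟩
        · rw [cnfVars_insert, mul_add, mul_one, add_comm]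
          refine (Finset.card_union_le _ _).trans (add_le_add ?_ hcard)
          exact Finset.card_image_le.trans (hφ.2 c hc)
        · refine (satProb_insert_le (hφ.1 c hc) (hφ.2 c hc) hdis).trans ?_
          rw [pow_succ']
          gcongr

/-! ### Fixing the values of some variables -/

/-- The residual formula of `φ` after the variables of `V` have been given the values encoded by
`T ⊆ V`: satisfied clauses are dropped and false literals deleted. Unlike in `restrict`, no unit
clauses recording the assignment are added. -/
noncomputable def residualCnf (φ : PCnf) (V T : Finset ℕ) : PCnf :=
  (φ.filter fun c => ¬ ∃ l ∈ c, litTrue V T l).image fun c => c.filter fun l => ¬ litFalse V T l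

lemma mem_residualCnf {φ : PCnf} {V T : Finset ℕ} {d : PClause} :
    d ∈ residualCnf φ V T ↔
      ∃ c ∈ φ, (∀ l ∈ c, ¬ litTrue V T l) ∧ (c.filter fun l => ¬ litFalse V T l) = d := by
  simp only [residualCnf, Finset.mem_image, Finset.mem_filter, not_exists, not_and, and_assoc]

lemma cnfVars_residualCnf (φ : PCnf) (V T : Finset ℕ) :
    cnfVars (residualCnf φ V T) ⊆ cnfVars φ \ V := by
  rw [cnfVars_subset]
  intro d hd l hl
  obtain ⟨c, hc, hnt, rfl⟩ := mem_residualCnf.1 hd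
  rw [Finset.mem_filter] at hl
  refine Finset.mem_sdiff.2 ⟨mem_cnfVars hc hl.1, fun hlV => ?_⟩
  have h1 := hnt l hl.1
  have h2 := hl.2
  unfold litTrue at h1
  unfold litFalse at h2
  tauto

lemma isKCnf_residualCnf {k : ℕ} {φ : PCnf} (hφ : IsKCnf (k + 1) φ) {V : Finset ℕ} (T : Finset ℕ)
    (hV : ∀ c ∈ φ, ¬ Disjoint (clauseVars c) V) : IsKCnf k (residualCnf φ V T) := by
  constructor
  · intro d hd v hv
    obtain ⟨c, hc, -, rfl⟩ := mem_residualCnf.1 hd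
    exact hφ.1 c hc v ⟨(Finset.mem_filter.1 hv.1).1, (Finset.mem_filter.1 hv.2).1⟩
  · intro d hd
    obtain ⟨c, hc, hnt, rfl⟩ := mem_residualCnf.1 hd
    obtain ⟨v, hv, hvV⟩ := Finset.not_disjoint_iff.1 (hV c hc)
    obtain ⟨l, hl, rfl⟩ := Finset.mem_image.1 hv
    have hlf : litFalse V T l := ⟨hvV, fun hs => hnt l hl ⟨hvV, hs⟩⟩
    have hlt : (c.filter fun l => ¬ litFalse V T l).card < c.card :=
      Finset.card_lt_card (Finset.filter_ssubset.2 ⟨l, hl, not_not.2 hlf⟩)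
    have := hφ.2 c hc
    omega

lemma cnfSat_union_iff {φ : PCnf} {V T U : Finset ℕ} (hT : T ⊆ V) (hU : Disjoint V U) :
    cnfSat (T ∪ U) φ ↔ cnfSat U (residualCnf φ V T) := by
  have hin : ∀ l : PLit, l.1 ∈ V → (litSat (T ∪ U) l ↔ litSat T l) := fun l hl =>
    litSat_congr (by simp [Finset.disjoint_left.1 hU hl])
  have hout : ∀ l : PLit, l.1 ∉ V → (litSat (T ∪ U) l ↔ litSat U l) := fun l hl =>
    litSat_congr (by simp [show l.1 ∉ T from fun h => hl (hT h)])
  constructor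
  · intro h d hd
    obtain ⟨c, hc, hnt, rfl⟩ := mem_residualCnf.1 hd
    obtain ⟨l, hl, hs⟩ := h c hc
    have hlV : l.1 ∉ V := fun hlV => hnt l hl ⟨hlV, (hin l hlV).1 hs⟩
    exact ⟨l, Finset.mem_filter.2 ⟨hl, fun hf => hlV hf.1⟩, (hout l hlV).1 hs⟩
  · intro h c hc
    by_cases ht : ∃ l ∈ c, litTrue V T l
    · obtain ⟨l, hl, hlV, hs⟩ := ht
      exact ⟨l, hl, (hin l hlV).2 hs⟩
    · push Not at ht
      have hd := mem_residualCnf.2 ⟨c, hc, ht, rfl⟩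
      obtain ⟨l, hl, hs⟩ := h _ hd
      have hlV : l.1 ∉ V := (Finset.mem_sdiff.1 (cnfVars_residualCnf φ V T (mem_cnfVars hd hl))).2
      exact ⟨l, (Finset.mem_filter.1 hl).1, (hout l hlV).2 hs⟩

lemma satProb_eq_sum_residualCnf (φ : PCnf) (V : Finset ℕ) :
    satProb φ = (∑ T ∈ V.powerset, satProb (residualCnf φ V T)) / 2 ^ V.card := by
  set B := cnfVars φ \ V with hB
  have hdis : Disjoint V B := Finset.disjoint_sdiff
  have hsub : cnfVars φ ⊆ V ∪ B := by simp [hB]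
  rw [← probOn_eq_satProb hsub]
  simp only [← probOn_eq_satProb (cnfVars_residualCnf φ V _)]
  unfold probOn
  rw [sum_powerset_union hdis, Finset.card_union_of_disjoint hdis, pow_add, ← Finset.sum_div,
    div_div, mul_comm ((2 : ℝ) ^ V.card)]
  congr 1
  refine Finset.sum_congr rfl fun T hT => Finset.sum_congr rfl fun U hU => ?_
  simp only [cnfSat_union_iff (Finset.mem_powerset.1 hT)
    (hdis.mono_right (Finset.mem_powerset.1 hU))]

/-! ### Well-ordering -/

/-- Finitely many sequences in a set without strictly increasing sequences have a common
subsequence along which all of them are non-increasing. -/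
lemma exists_antitone_subseq {ι : Type*} {A : Set ℝ}
    (hA : ¬ ∃ f : ℕ → ℝ, StrictMono f ∧ ∀ n, f n ∈ A) (g : ℕ → ι → ℝ) (hg : ∀ n i, g n i ∈ A)
    (s : Finset ι) : ∃ e : ℕ → ℕ, StrictMono e ∧ ∀ i ∈ s, Antitone fun n => g (e n) i := by
  induction s using Finset.induction_on with
  | empty => exact ⟨id, strictMono_id, by simp⟩
  | insert a s _ ih =>
    obtain ⟨e, he, hs⟩ := ih
    obtain ⟨e', h | h⟩ := exists_increasing_or_nonincreasing_subseq (· < ·) fun n => g (e n) a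
    · exact absurd ⟨_, fun m n hmn => h m n hmn, fun n => hg _ _⟩ hA
    · refine ⟨e ∘ e', he.comp e'.strictMono, fun i hi => ?_⟩
      rcases Finset.mem_insert.1 hi with rfl | hi
      · intro m n hmn
        rcases hmn.eq_or_lt with rfl | hlt
        · exact le_rfl
        · exact not_lt.1 (h m n hlt)
      · exact (hs i hi).comp_monotone e'.monotone

/-- Every satisfaction probability of a `(k+1)`CNF formula that is at least `ε` is an average of
`2 ^ m` satisfaction probabilities of `k`CNF formulas, with `m` depending only on `k` and `ε`. -/
lemma exists_average (k : ℕ) {ε : ℝ} (hε : 0 < ε) :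
    ∃ m : ℕ, ∀ x ∈ kcnfSpectrum (k + 1), ε ≤ x →
      ∃ g : Fin (2 ^ m) → ℝ, (∀ i, g i ∈ kcnfSpectrum k) ∧ x = (∑ i, g i) / 2 ^ m := by
  have hr : 1 - (1 / 2 : ℝ) ^ (k + 1) < 1 := sub_lt_self _ (by positivity)
  obtain ⟨p, hp⟩ := exists_pow_lt_of_lt_one hε hr
  refine ⟨(k + 1) * p, ?_⟩
  rintro _ ⟨φ, hφ, rfl⟩ hx
  rcases hitting_or_small hφ p with ⟨V₀, hV₀, hhit₀⟩ | ⟨ψ, hψ, -, hprob⟩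
  · obtain ⟨V, hVV, hV⟩ := Infinite.exists_superset_card_eq V₀ _ hV₀
    have hhit : ∀ c ∈ φ, ¬ Disjoint (clauseVars c) V :=
      fun c hc hd => hhit₀ c hc (hd.mono_right hVV)
    have hcard : V.powerset.card = 2 ^ ((k + 1) * p) := by rw [Finset.card_powerset, hV]
    let e := (V.powerset.equivFinOfCardEq hcard).symm
    refine ⟨fun i => satProb (residualCnf φ V (e i)),
      fun i => ⟨_, isKCnf_residualCnf hφ _ hhit, rfl⟩, ?_⟩
    rw [satProb_eq_sum_residualCnf φ V, hV, ← Finset.sum_coe_sort, ← Equiv.sum_comp e]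
  · linarith [satProb_anti hψ]

lemma satProb_of_isKCnf_zero {φ : PCnf} (hφ : IsKCnf 0 φ) : satProb φ = 0 ∨ satProb φ = 1 := by
  have hv : cnfVars φ = ∅ := by
    rw [← Finset.subset_empty, cnfVars_subset]
    intro c hc l hl
    have := Finset.card_eq_zero.1 (Nat.le_zero.1 (hφ.2 c hc))
    simp [this] at hl
  by_cases h : cnfSat ∅ φ <;> simp [satProb_eq_probOn, probOn, hv, h, Finset.filter_singleton]

/-- **Spectral Well-Ordering Theorem.** For every `k`, the set of satisfaction
probabilities of `k`CNF formulas is well-ordered by `>`: there is no infinite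
strictly increasing sequence of elements of the spectrum. -/
theorem spectral_well_ordering (k : ℕ) :
    ¬ ∃ f : ℕ → ℝ, StrictMono f ∧ ∀ n, f n ∈ kcnfSpectrum k := by
  induction k with
  | zero =>
    rintro ⟨f, hf, hmem⟩
    have h : ∀ n, f n = 0 ∨ f n = 1 := fun n => by
      obtain ⟨φ, hφ, hx⟩ := hmem n
      exact hx ▸ satProb_of_isKCnf_zero hφ
    have h01 := hf zero_lt_one
    have h12 := hf one_lt_two
    rcases h 0 with h0 | h0 <;> rcases h 1 with h1 | h1 <;> rcases h 2 with h2 | h2 <;> linarith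
  | succ k ih =>
    rintro ⟨f, hf, hmem⟩
    have hpos : 0 < f 1 := by
      obtain ⟨φ, -, hx⟩ := hmem 0
      exact (hx ▸ satProb_nonneg φ).trans_lt (hf zero_lt_one)
    obtain ⟨m, hm⟩ := exists_average k hpos
    choose g hg hfg using fun n =>
      hm (f (n + 1)) (hmem _) (hf.monotone (Nat.le_add_left 1 n))
    obtain ⟨e, he, hanti⟩ := exists_antitone_subseq ih g hg Finset.univ
    have hlt : f (e 0 + 1) < f (e 1 + 1) := hf (Nat.add_lt_add_right (he zero_lt_one) 1)
    refine hlt.not_ge ?_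
    rw [hfg, hfg]
    gcongr with i hi
    exact hanti i hi zero_le_one
end

section
/- Kernel existence: for every k ∈ ℕ and every δ ∈ [0,1] there is a size s ∈ ℕ such that for every kCNF formula φ with σ(φ) ≥ δ there exists a kCNF formula κ with |κ| ≤ s and δ ≤ σ(κ) ≤ σ(φ). -/
/-!
The formula `κ` may be chosen independently of `φ`: it suffices that the set of satisfaction
probabilities `≥ δ` of `k`CNF formulas has a least element, for then a formula attaining it serves
every `φ`, and its number of clauses is the bound `s`. Since `1` belongs to the spectrum (empty
formula), this least element exists by compactness once the spectrum is topologically closed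
(`isClosed_kcnfSpectrum`).

Closedness is proved by a sunflower argument. Suppose every clause of `φ` has at most `w` variables
outside a set `V` of bounded size, and group the clauses with exactly `w` outside variables by
their part `a` inside `V`; the number of groups is bounded in terms of `|V|`. Fix a threshold `p`.
If some group contains `p` clauses with pairwise disjoint outside parts, replacing the group by the
single clause `a` changes the probability by at most `(1 - 2⁻ᵏ) ^ p` (`replace_by_core`) and leaves
one group fewer. If no group does, the variables of maximal packings, boundedly many, can be moved
into `V`, and `w` drops (`stage_dichotomy`). For a given limit point, either some fixed `p` yields
formulas of the second kind arbitrarily close to it, or every `p` leaves only formulas of the first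
kind near it, and the error `(1 - 2⁻ᵏ) ^ p` tends to `0`; in both cases the point is a limit of
probabilities of simpler formulas. Lexicographic induction on `w` and the number of groups (`closure_stage_subset`) ends
at `w = 0`, where `V` contains all variables and only finitely many probabilities occur.
-/

open Finset

open scoped Classical

/-! ### Counting satisfying assignments -/

/-- Whether `S` satisfies a clause depends only on the part of `S` inside the clause's variables. -/
lemma clauseSat_congr {S S' : Finset ℕ} {c : PClause}
    (h : ∀ v ∈ clauseVars c, (v ∈ S ↔ v ∈ S')) : clauseSat S c ↔ clauseSat S' c := by
  unfold clauseSat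
  refine exists_congr fun l => and_congr_right fun hl => ?_
  have hv := h l.1 (Finset.mem_image_of_mem _ hl)
  unfold litSat
  split_ifs <;> simp [hv]

lemma clauseVars_subset {φ : PCnf} {c : PClause} (hc : c ∈ φ) : clauseVars c ⊆ cnfVars φ :=
  Finset.le_sup (f := clauseVars) hc

/-- The satisfaction probability may be computed over any finite set of variables containing
`cnfVars φ`. -/
lemma satProb_eq {φ : PCnf} {W : Finset ℕ} (hW : cnfVars φ ⊆ W) :
    satProb φ = ((W.powerset.filter (fun S => cnfSat S φ)).card : ℝ) / 2 ^ W.card := by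
  have key : (W.powerset.filter (fun S => cnfSat S φ)).card =
      ((cnfVars φ).powerset.filter (fun S => cnfSat S φ)).card * 2 ^ (W \ cnfVars φ).card := by
    rw [← Finset.card_powerset, ← Finset.card_product]
    refine Finset.card_nbij' (fun S => (S ∩ cnfVars φ, S \ cnfVars φ)) (fun p => p.1 ∪ p.2)
      ?_ ?_ ?_ ?_
    · intro S hS
      simp only [Finset.mem_coe, Finset.mem_filter, Finset.mem_powerset, Finset.mem_product] at hS ⊢
      refine ⟨⟨Finset.inter_subset_right, fun c hc => ?_⟩, Finset.sdiff_subset_sdiff hS.1 le_rfl⟩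
      refine (clauseSat_congr fun v hv => ?_).1 (hS.2 c hc)
      simp [clauseVars_subset hc hv]
    · rintro ⟨A, B⟩ h
      simp only [Finset.mem_coe, Finset.mem_filter, Finset.mem_powerset, Finset.mem_product] at h ⊢
      refine ⟨Finset.union_subset (h.1.1.trans hW) (h.2.trans Finset.sdiff_subset),
        fun c hc => ?_⟩
      refine (clauseSat_congr fun v hv => ?_).1 (h.1.2 c hc)
      have hB : v ∉ B := fun hb => (Finset.mem_sdiff.1 (h.2 hb)).2 (clauseVars_subset hc hv)
      simp [hB]
    · intro S _
      ext v
      simp only [Finset.mem_union, Finset.mem_inter, Finset.mem_sdiff]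
      tauto
    · rintro ⟨A, B⟩ h
      simp only [Finset.mem_coe, Finset.mem_filter, Finset.mem_powerset, Finset.mem_product] at h
      have hA : ∀ v ∈ A, v ∈ cnfVars φ := fun v hv => h.1.1 hv
      have hB : ∀ v ∈ B, v ∉ cnfVars φ := fun v hv => (Finset.mem_sdiff.1 (h.2 hv)).2
      ext v <;> simp only [Finset.mem_union, Finset.mem_inter, Finset.mem_sdiff] <;>
        have := hA v <;> have := hB v <;> tauto
  have hcard : W.card = (W \ cnfVars φ).card + (cnfVars φ).card :=
    (Finset.card_sdiff_add_card_eq_card hW).symm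
  rw [key, hcard, satProb, pow_add]
  push_cast
  field_simp

lemma satCount_le (φ : PCnf) :
    ((cnfVars φ).powerset.filter (fun S => cnfSat S φ)).card ≤ 2 ^ (cnfVars φ).card := by
  rw [← Finset.card_powerset]
  exact Finset.card_filter_le _ _

/-- The assignment obtained from `S` by falsifying every literal of `e`, provided
`e` contains no complementary literals. -/
noncomputable def falsify (e : PClause) (S : Finset ℕ) : Finset ℕ :=
  (S \ clauseVars e) ∪ (clauseVars e).filter (fun v => (v, false) ∈ e)

lemma not_clauseSat_falsify {e : PClause} (he : clauseValid e) (S : Finset ℕ) :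
    ¬ clauseSat (falsify e S) e := by
  rintro ⟨⟨v, b⟩, hl, hs⟩
  have hv : v ∈ clauseVars e := Finset.mem_image_of_mem Prod.fst hl
  cases b
  · simp [litSat, falsify, hv, hl] at hs
  · simp only [litSat, falsify, if_true, Finset.mem_union, Finset.mem_sdiff, hv, not_true,
      and_false, false_or, Finset.mem_filter, true_and] at hs
    exact he v ⟨hl, hs⟩

/-- Falsifying `e` does not affect conditions on other variables and is at most `2 ^ k`-to-one,
so a condition `P` independent of `e` holds together with `¬ e` on a fraction at least `2⁻ᵏ`
of the assignments on which it holds, and together with `e` on at most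
the remaining fraction `1 - 2⁻ᵏ`. Invariance of `P` under `falsify e` is the form of independence
needed. -/
lemma card_sat_clause_le {k : ℕ} {W : Finset ℕ} {e : PClause} (he : clauseValid e)
    (hk : e.card ≤ k) (hW : clauseVars e ⊆ W) (P : Finset ℕ → Prop)
    (hP : ∀ S, P S → P (falsify e S)) :
    ((W.powerset.filter (fun S => P S ∧ clauseSat S e)).card : ℝ) ≤
      (1 - (1 / 2) ^ k) * (W.powerset.filter P).card := by
  set N := W.powerset.filter P with hN
  set N0 := N.filter (fun S => ¬ clauseSat S e) with hN0
  have hsplit : (W.powerset.filter (fun S => P S ∧ clauseSat S e)).card + N0.card = N.card := by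
    rw [← Finset.filter_filter]
    exact Finset.card_filter_add_card_filter_not _
  have hfib : N.card ≤ 2 ^ k * N0.card := by
    refine Finset.card_le_mul_card_image_of_maps_to (f := falsify e) ?_ _ ?_
    · intro S hS
      simp only [hN, hN0, Finset.mem_filter, Finset.mem_powerset] at hS ⊢
      refine ⟨⟨?_, hP S hS.2⟩, not_clauseSat_falsify he S⟩
      exact Finset.union_subset (Finset.sdiff_subset.trans hS.1)
        ((Finset.filter_subset _ _).trans hW)
    · intro T _
      have hce : 2 ^ (clauseVars e).card ≤ 2 ^ k :=
        Nat.pow_le_pow_right (by norm_num) (Finset.card_image_le.trans hk)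
      refine le_trans ?_ hce
      rw [← Finset.card_powerset]
      refine Finset.card_le_card_of_injOn (fun S => S ∩ clauseVars e) ?_ ?_
      · intro S _
        simp
      · intro S hS S' hS' h
        simp only [Finset.coe_filter, Set.mem_ofPred_eq] at hS hS'
        have h2 : falsify e S = falsify e S' := hS.2.trans hS'.2.symm
        ext v
        by_cases hv : v ∈ clauseVars e
        · have := congrArg (v ∈ ·) h
          simpa [hv] using this
        · have := congrArg (v ∈ ·) h2
          simpa [falsify, hv] using this
  have h1 : (N.card : ℝ) ≤ 2 ^ k * N0.card := by exact_mod_cast hfib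
  have h2 : ((W.powerset.filter (fun S => P S ∧ clauseSat S e)).card : ℝ) + N0.card = N.card := by
    exact_mod_cast hsplit
  have h3 : (1 / 2 : ℝ) ^ k * N.card ≤ N0.card := by
    rw [one_div, inv_pow, inv_mul_le_iff₀ (by positivity)]
    exact h1
  linarith

/-- A packing of `p` clauses with at most `k` literals each is satisfied with probability at most
`(1 - 2⁻ᵏ) ^ p`. -/
lemma card_sat_packing_le {k : ℕ} {W : Finset ℕ} (g : PClause → PClause) (π : Finset PClause)
    (hv : ∀ c ∈ π, clauseValid (g c)) (hk : ∀ c ∈ π, (g c).card ≤ k)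
    (hW : ∀ c ∈ π, clauseVars (g c) ⊆ W)
    (hd : ∀ c ∈ π, ∀ c' ∈ π, c ≠ c' → Disjoint (clauseVars (g c)) (clauseVars (g c'))) :
    ((W.powerset.filter (fun S => ∀ c ∈ π, clauseSat S (g c))).card : ℝ) ≤
      (1 - (1 / 2) ^ k) ^ π.card * 2 ^ W.card := by
  induction π using Finset.induction_on with
  | empty => simp
  | insert c π hc ih =>
    have ih' := ih (fun c h => hv c (Finset.mem_insert_of_mem h))
      (fun c h => hk c (Finset.mem_insert_of_mem h))
      (fun c h => hW c (Finset.mem_insert_of_mem h))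
      (fun c h c' h' => hd c (Finset.mem_insert_of_mem h) c' (Finset.mem_insert_of_mem h'))
    have hcm := Finset.mem_insert_self c π
    have hstep := card_sat_clause_le (hv c hcm) (hk c hcm) (hW c hcm)
      (fun S => ∀ c ∈ π, clauseSat S (g c)) (by
        intro S hS c' hc'
        refine (clauseSat_congr fun v hv' => ?_).1 (hS c' hc')
        have hne : c' ≠ c := fun h => hc (h ▸ hc')
        have := Finset.disjoint_left.1 (hd c' (Finset.mem_insert_of_mem hc') c hcm hne) hv'
        simp [falsify, this])
    have hset : (W.powerset.filter (fun S => ∀ c' ∈ insert c π, clauseSat S (g c'))) =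
        W.powerset.filter (fun S => (∀ c ∈ π, clauseSat S (g c)) ∧ clauseSat S (g c)) := by
      refine Finset.filter_congr fun S _ => ?_
      simp only [Finset.forall_mem_insert]
      exact and_comm
    have hq : (0 : ℝ) ≤ 1 - (1 / 2) ^ k := by
      have : (1 / 2 : ℝ) ^ k ≤ 1 := pow_le_one₀ (by norm_num) (by norm_num)
      linarith
    rw [hset, Finset.card_insert_of_notMem hc, pow_succ]
    calc _ ≤ (1 - (1 / 2) ^ k) *
          ((W.powerset.filter (fun S => ∀ c ∈ π, clauseSat S (g c))).card : ℝ) := by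
          convert hstep
      _ ≤ (1 - (1 / 2) ^ k) * ((1 - (1 / 2) ^ k) ^ π.card * 2 ^ W.card) := by gcongr
      _ = _ := by ring

/-! ### Packings and hitting sets -/

/-- A family of nonempty sets of size at most `k` contains `p` pairwise disjoint members or is hit
by a set of size at most `p * k` (the union of a maximal disjoint subfamily). -/
lemma packing_or_hitting {α : Type*} (L : Finset α) (f : α → Finset ℕ) (k : ℕ)
    (hk : ∀ c ∈ L, (f c).card ≤ k) (hne : ∀ c ∈ L, (f c).Nonempty) (p : ℕ) :
    (∃ π ⊆ L, π.card = p ∧ ∀ c ∈ π, ∀ c' ∈ π, c ≠ c' → Disjoint (f c) (f c')) ∨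
      ∃ U : Finset ℕ, U.card ≤ p * k ∧ ∀ c ∈ L, ¬ Disjoint (f c) U := by
  induction p with
  | zero => exact Or.inl ⟨∅, by simp⟩
  | succ p ih =>
    rcases ih with ⟨π, hπ, hcard, hd⟩ | ⟨U, hU, h⟩
    · by_cases hhit : ∀ c ∈ L, ¬ Disjoint (f c) (π.biUnion f)
      · refine Or.inr ⟨π.biUnion f, ?_, hhit⟩
        have := Finset.card_biUnion_le_card_mul π f k (fun c hc => hk c (hπ hc))
        rw [hcard] at this
        exact this.trans (Nat.mul_le_mul_right _ (Nat.le_succ p))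
      · push Not at hhit
        obtain ⟨c, hc, hdis⟩ := hhit
        rw [Finset.disjoint_biUnion_right] at hdis
        have hcπ : c ∉ π := fun h => (hne c hc).ne_empty (disjoint_self.1 (hdis c h))
        refine Or.inl ⟨insert c π, Finset.insert_subset hc hπ, ?_, ?_⟩
        · rw [Finset.card_insert_of_notMem hcπ, hcard]
        · intro a ha b hb hab
          rcases Finset.mem_insert.1 ha with rfl | ha' <;>
            rcases Finset.mem_insert.1 hb with rfl | hb'
          · exact absurd rfl hab
          · exact hdis b hb'
          · exact (hdis a ha').symm
          · exact hd a ha' b hb' hab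
    · exact Or.inr ⟨U, hU.trans (Nat.mul_le_mul_right _ (Nat.le_succ p)), h⟩

/-! ### Formulas of bounded width outside a finite set of variables -/

/-- The part of a clause on the variables in `V`. -/
noncomputable def insidePart (V : Finset ℕ) (c : PClause) : PClause := c.filter (fun l => l.1 ∈ V)

/-- The part of a clause on the variables not in `V`. -/
noncomputable def outsidePart (V : Finset ℕ) (c : PClause) : PClause := c.filter (fun l => l.1 ∉ V)

lemma clauseVars_outsidePart (V : Finset ℕ) (c : PClause) :
    clauseVars (outsidePart V c) = clauseVars c \ V := by
  ext v
  simp only [clauseVars, outsidePart, Finset.mem_image, Finset.mem_filter, Finset.mem_sdiff]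
  constructor
  · rintro ⟨l, ⟨h, h'⟩, rfl⟩
    exact ⟨⟨l, h, rfl⟩, h'⟩
  · rintro ⟨⟨l, h, rfl⟩, h'⟩
    exact ⟨l, ⟨h, h'⟩, rfl⟩

/-- The clauses of `φ` with exactly `w` variables outside `V`. -/
noncomputable def wideClauses (φ : PCnf) (V : Finset ℕ) (w : ℕ) : PCnf :=
  φ.filter (fun c => (clauseVars c \ V).card = w)

/-- The distinct inside parts of the clauses with exactly `w` variables outside `V`. -/
noncomputable def wideCores (φ : PCnf) (V : Finset ℕ) (w : ℕ) : Finset PClause :=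
  (wideClauses φ V w).image (insidePart V)

/-- There are at most `4 ^ |V|` inside parts, since they are subsets of `V × Bool`. -/
lemma card_wideCores_le (φ : PCnf) (V : Finset ℕ) (w : ℕ) :
    (wideCores φ V w).card ≤ 2 ^ (V.card * 2) := by
  have hsub : wideCores φ V w ⊆ (V ×ˢ (Finset.univ : Finset Bool)).powerset := by
    intro a ha
    obtain ⟨c, _, rfl⟩ := Finset.mem_image.1 ha
    rw [Finset.mem_powerset]
    intro l hl
    simpa using (Finset.mem_filter.1 hl).2
  simpa [Finset.card_product] using Finset.card_le_card hsub

/-- Satisfaction probabilities of `k`CNF formulas for which some set `V` of at most `m` variables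
leaves at most `w` variables in every clause, the clauses attaining `w` having at most `t` distinct
inside parts. -/
def stage (k m w t : ℕ) : Set ℝ :=
  {x | ∃ (φ : PCnf) (V : Finset ℕ), IsKCnf k φ ∧ V.card ≤ m ∧
    (∀ c ∈ φ, (clauseVars c \ V).card ≤ w) ∧ (wideCores φ V w).card ≤ t ∧ satProb φ = x}

lemma stage_subset (k m w t : ℕ) : stage k m w t ⊆ kcnfSpectrum k := by
  rintro x ⟨φ, _, h, _, _, _, hx⟩
  exact ⟨φ, h, hx⟩

/-- Only finitely many probabilities come from formulas with at most `m` variables. -/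
lemma stage_zero_finite (k m t : ℕ) : (stage k m 0 t).Finite := by
  refine Set.Finite.subset (((Finset.range (2 ^ m + 1) ×ˢ Finset.range (m + 1)).image
    (fun p : ℕ × ℕ => (p.1 : ℝ) / 2 ^ p.2)).finite_toSet) ?_
  rintro x ⟨φ, V, _, hV, hw, _, rfl⟩
  have hsub : cnfVars φ ⊆ V := by
    refine Finset.sup_le fun c hc => ?_
    have := hw c hc
    rwa [Nat.le_zero, Finset.card_eq_zero, Finset.sdiff_eq_empty_iff_subset] at this
  have hm : (cnfVars φ).card ≤ m := (Finset.card_le_card hsub).trans hV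
  rw [Finset.mem_coe, Finset.mem_image]
  refine ⟨(_, (cnfVars φ).card), ?_, rfl⟩
  rw [Finset.mem_product, Finset.mem_range, Finset.mem_range]
  refine ⟨Nat.lt_succ_of_le ((satCount_le φ).trans ?_), Nat.lt_succ_of_le hm⟩
  exact Nat.pow_le_pow_right (by norm_num) hm

/-- Clauses sharing the inside part `a` may be replaced by `a` alone. If they contain `p` clauses
with pairwise disjoint outside parts, an assignment lost in this replacement satisfies all these
outside parts, so the probability changes by at most `(1 - 2⁻ᵏ) ^ p`. -/
lemma replace_by_core {k p : ℕ} {φ : PCnf} (hφ : IsKCnf k φ) {V : Finset ℕ} {w : ℕ}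
    {a : PClause} (ha : a ∈ wideCores φ V w) {π : Finset PClause}
    (hπ : π ⊆ (wideClauses φ V w).filter (fun c => insidePart V c = a)) (hp : π.card = p)
    (hd : ∀ c ∈ π, ∀ c' ∈ π, c ≠ c' → Disjoint (clauseVars c \ V) (clauseVars c' \ V)) :
    |satProb φ - satProb (insert a (φ \ (wideClauses φ V w).filter (fun c => insidePart V c = a)))|
      ≤ (1 - (1 / 2) ^ k) ^ p := by
  set L := (wideClauses φ V w).filter (fun c => insidePart V c = a) with hL
  set φ' := insert a (φ \ L) with hφ'
  have hLφ : L ⊆ φ := (Finset.filter_subset _ _).trans (Finset.filter_subset _ _)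
  obtain ⟨c₀, hc₀, hc₀a⟩ := Finset.mem_image.1 ha
  have hac₀ : a ⊆ c₀ := hc₀a ▸ Finset.filter_subset _ _
  have hvars : cnfVars φ' ⊆ cnfVars φ := by
    refine Finset.sup_le fun c hc => ?_
    rcases Finset.mem_insert.1 hc with rfl | hc
    · exact (Finset.image_subset_image hac₀).trans
        (clauseVars_subset (Finset.mem_filter.1 hc₀).1)
    · exact clauseVars_subset (Finset.mem_sdiff.1 hc).1
  rw [satProb_eq hvars, satProb]
  set W := cnfVars φ
  set N := W.powerset.filter (fun S => cnfSat S φ) with hN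
  set N' := W.powerset.filter (fun S => cnfSat S φ') with hN'
  have hsat : ∀ S, cnfSat S φ' → cnfSat S φ := by
    intro S hS c hc
    by_cases hcL : c ∈ L
    · obtain ⟨l, hl, hs⟩ := hS a (Finset.mem_insert_self _ _)
      have hca : insidePart V c = a := (Finset.mem_filter.1 hcL).2
      exact ⟨l, (Finset.filter_subset _ _) (hca ▸ hl), hs⟩
    · exact hS c (Finset.mem_insert_of_mem (Finset.mem_sdiff.2 ⟨hc, hcL⟩))
  have hNN : N' ⊆ N := by
    intro S hS
    rw [hN', Finset.mem_filter] at hS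
    exact Finset.mem_filter.2 ⟨hS.1, hsat S hS.2⟩
  have hlost : N \ N' ⊆ W.powerset.filter (fun S => ∀ c ∈ π, clauseSat S (outsidePart V c)) := by
    intro S hS
    rw [Finset.mem_sdiff, hN, hN', Finset.mem_filter, Finset.mem_filter] at hS
    obtain ⟨⟨hSW, hSφ⟩, hS'⟩ := hS
    have hna : ¬ clauseSat S a := by
      intro hSa
      refine hS' ⟨hSW, fun c hc => ?_⟩
      rcases Finset.mem_insert.1 hc with rfl | hc
      · exact hSa
      · exact hSφ c (Finset.mem_sdiff.1 hc).1
    refine Finset.mem_filter.2 ⟨hSW, fun c hc => ?_⟩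
    have hcL := hπ hc
    obtain ⟨l, hl, hs⟩ := hSφ c (hLφ hcL)
    refine ⟨l, Finset.mem_filter.2 ⟨hl, fun hlV => hna ⟨l, ?_, hs⟩⟩, hs⟩
    rw [← (Finset.mem_filter.1 hcL).2]
    exact Finset.mem_filter.2 ⟨hl, hlV⟩
  have hpack := card_sat_packing_le (k := k) (W := W) (outsidePart V) π
    (fun c hc v hv => hφ.1 c (hLφ (hπ hc)) v
      ⟨Finset.filter_subset _ _ hv.1, Finset.filter_subset _ _ hv.2⟩)
    (fun c hc => (Finset.card_filter_le _ _).trans (hφ.2 c (hLφ (hπ hc))))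
    (fun c hc => by
      rw [clauseVars_outsidePart]
      exact Finset.sdiff_subset.trans (clauseVars_subset (hLφ (hπ hc))))
    (fun c hc c' hc' h => by
      rw [clauseVars_outsidePart, clauseVars_outsidePart]
      exact hd c hc c' hc' h)
  have h1 : ((N \ N').card : ℝ) ≤ (1 - (1 / 2) ^ k) ^ p * 2 ^ W.card := by
    rw [← hp]
    exact le_trans (by exact_mod_cast Finset.card_le_card hlost) hpack
  have h2 : ((N \ N').card : ℝ) + N'.card = N.card := by
    exact_mod_cast Finset.card_sdiff_add_card_eq_card hNN
  have h3 : (N.card : ℝ) / 2 ^ W.card - N'.card / 2 ^ W.card = (N \ N').card / 2 ^ W.card := by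
    rw [← h2]; ring
  rw [h3, abs_of_nonneg (by positivity), div_le_iff₀ (by positivity)]
  exact h1

/-- For each threshold `p`, a formula either passes to smaller outside width with boundedly many
further inside variables, or loses one wide core at the cost of a change of at most
`(1 - 2⁻ᵏ) ^ p` in probability. -/
lemma stage_dichotomy (k m w t p : ℕ) {x : ℝ} (hx : x ∈ stage k m (w + 1) t) :
    x ∈ stage k (m + t * (p * k)) w (2 ^ ((m + t * (p * k)) * 2)) ∨
      ∃ t', t = t' + 1 ∧ ∃ y ∈ stage k m (w + 1) t', |x - y| ≤ (1 - (1 / 2) ^ k) ^ p := by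
  obtain ⟨φ, V, hφ, hV, hw, ht, rfl⟩ := hx
  let L : PClause → PCnf := fun a => (wideClauses φ V (w + 1)).filter (fun c => insidePart V c = a)
  have hLφ : ∀ a, L a ⊆ φ := fun a =>
    (Finset.filter_subset _ _).trans (Finset.filter_subset _ _)
  have hLw : ∀ a, ∀ c ∈ L a, (clauseVars c \ V).card = w + 1 := fun a c hc =>
    (Finset.mem_filter.1 (Finset.mem_filter.1 hc).1).2
  have hdich := fun a => packing_or_hitting (L a) (fun c => clauseVars c \ V) k
    (fun c hc => (Finset.card_le_card Finset.sdiff_subset).trans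
      (Finset.card_image_le.trans (hφ.2 c (hLφ a hc))))
    (fun c hc => Finset.card_pos.1 (by rw [hLw a c hc]; omega)) p
  by_cases hbig : ∃ a ∈ wideCores φ V (w + 1), ∃ π ⊆ L a, π.card = p ∧
      ∀ c ∈ π, ∀ c' ∈ π, c ≠ c' → Disjoint (clauseVars c \ V) (clauseVars c' \ V)
  · right
    obtain ⟨a, ha, π, hπ, hp, hd⟩ := hbig
    have hpos : 0 < (wideCores φ V (w + 1)).card := Finset.card_pos.2 ⟨a, ha⟩
    refine ⟨t - 1, by omega, _, ⟨_, V, ?_, hV, ?_, ?_, rfl⟩, replace_by_core hφ ha hπ hp hd⟩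
    · obtain ⟨c₀, hc₀, hc₀a⟩ := Finset.mem_image.1 ha
      have hac₀ : a ⊆ c₀ := hc₀a ▸ Finset.filter_subset _ _
      have hc₀φ : c₀ ∈ φ := (Finset.mem_filter.1 hc₀).1
      constructor
      · intro c hc
        rcases Finset.mem_insert.1 hc with rfl | hc
        · exact fun v hv => hφ.1 c₀ hc₀φ v ⟨hac₀ hv.1, hac₀ hv.2⟩
        · exact hφ.1 c (Finset.mem_sdiff.1 hc).1
      · intro c hc
        rcases Finset.mem_insert.1 hc with rfl | hc
        · exact (Finset.card_le_card hac₀).trans (hφ.2 c₀ hc₀φ)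
        · exact hφ.2 c (Finset.mem_sdiff.1 hc).1
    all_goals
      have ha0 : (clauseVars a \ V).card = 0 := by
        obtain ⟨c₀, _, rfl⟩ := Finset.mem_image.1 ha
        rw [Finset.card_eq_zero, Finset.sdiff_eq_empty_iff_subset]
        intro v hv
        obtain ⟨l, hl, rfl⟩ := Finset.mem_image.1 hv
        exact (Finset.mem_filter.1 hl).2
    · intro c hc
      rcases Finset.mem_insert.1 hc with rfl | hc
      · omega
      · exact hw c (Finset.mem_sdiff.1 hc).1
    · have hsub : wideCores (insert a (φ \ L a)) V (w + 1) ⊆ (wideCores φ V (w + 1)).erase a := by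
        intro b hb
        obtain ⟨c, hc, rfl⟩ := Finset.mem_image.1 hb
        obtain ⟨hc1, hc2⟩ := Finset.mem_filter.1 hc
        rcases Finset.mem_insert.1 hc1 with rfl | hc1
        · omega
        · obtain ⟨hcφ, hcL⟩ := Finset.mem_sdiff.1 hc1
          have hcw : c ∈ wideClauses φ V (w + 1) := Finset.mem_filter.2 ⟨hcφ, hc2⟩
          exact Finset.mem_erase.2 ⟨fun h => hcL (Finset.mem_filter.2 ⟨hcw, h⟩),
            Finset.mem_image_of_mem _ hcw⟩
      have := Finset.card_le_card hsub
      rw [Finset.card_erase_of_mem ha] at this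
      exact this.trans (by omega)
  · left
    have hU : ∀ a, ∃ U : Finset ℕ, a ∈ wideCores φ V (w + 1) →
        U.card ≤ p * k ∧ ∀ c ∈ L a, ¬ Disjoint (clauseVars c \ V) U := by
      intro a
      by_cases ha : a ∈ wideCores φ V (w + 1)
      · rcases hdich a with h | ⟨U, hU⟩
        · exact absurd ⟨a, ha, h⟩ hbig
        · exact ⟨U, fun _ => hU⟩
      · exact ⟨∅, fun h => absurd h ha⟩
    choose U hU using hU
    set V' := V ∪ (wideCores φ V (w + 1)).biUnion U with hV'
    have hV'card : V'.card ≤ m + t * (p * k) := by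
      have h1 := Finset.card_biUnion_le_card_mul (wideCores φ V (w + 1)) U (p * k)
        (fun a ha => (hU a ha).1)
      exact (Finset.card_union_le _ _).trans
        (add_le_add hV (h1.trans (Nat.mul_le_mul_right _ ht)))
    refine ⟨φ, V', hφ, hV'card, ?_, ?_, rfl⟩
    · intro c hc
      have hsub : clauseVars c \ V' ⊆ clauseVars c \ V :=
        Finset.sdiff_subset_sdiff le_rfl Finset.subset_union_left
      by_cases hcw : (clauseVars c \ V).card = w + 1
      · have hcW : c ∈ wideClauses φ V (w + 1) := Finset.mem_filter.2 ⟨hc, hcw⟩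
        have haW : insidePart V c ∈ wideCores φ V (w + 1) := Finset.mem_image_of_mem _ hcW
        have hhit := (hU _ haW).2 c (Finset.mem_filter.2 ⟨hcW, rfl⟩)
        obtain ⟨v, hv, hvU⟩ := Finset.not_disjoint_iff.1 hhit
        have hlt : (clauseVars c \ V').card < (clauseVars c \ V).card := by
          refine Finset.card_lt_card ((Finset.ssubset_iff_of_subset hsub).2 ⟨v, hv, fun h => ?_⟩)
          exact (Finset.mem_sdiff.1 h).2
            (Finset.mem_union_right _ (Finset.mem_biUnion.2 ⟨_, haW, hvU⟩))
        omega
      · have := hw c hc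
        have := Finset.card_le_card hsub
        omega
    · exact (card_wideCores_le _ _ _).trans
        (Nat.pow_le_pow_right (by norm_num) (Nat.mul_le_mul_right _ hV'card))

/-! ### Closedness of the spectrum -/

/-- Lexicographic induction on the outside width `w` and the number `t` of wide cores. -/
lemma closure_stage_subset (k w : ℕ) : ∀ m t, closure (stage k m w t) ⊆ kcnfSpectrum k := by
  induction w with
  | zero =>
    intro m t
    rw [(stage_zero_finite k m t).isClosed.closure_eq]
    exact stage_subset k m 0 t
  | succ w ihw =>
    intro m t
    induction t with
    | zero =>
      intro x hx
      refine ihw (m + 0 * (0 * k)) (2 ^ ((m + 0 * (0 * k)) * 2)) (closure_mono ?_ hx)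
      intro y hy
      rcases stage_dichotomy k m w 0 0 hy with h | ⟨t', ht', _⟩
      · exact h
      · omega
    | succ t iht =>
      intro x hx
      by_cases hp : ∃ p, x ∈ closure (stage k (m + (t + 1) * (p * k)) w
          (2 ^ ((m + (t + 1) * (p * k)) * 2)))
      · obtain ⟨p, hp⟩ := hp
        exact ihw _ _ hp
      · -- Near `x` every threshold `p` forces the second alternative, so `x` is also a limit of
        -- probabilities of formulas with one wide core fewer.
        push Not at hp
        refine iht (Metric.mem_closure_iff.2 fun ε hε => ?_)
        have hq0 : (0 : ℝ) ≤ 1 - (1 / 2) ^ k := by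
          have : (1 / 2 : ℝ) ^ k ≤ 1 := pow_le_one₀ (by norm_num) (by norm_num)
          linarith
        have hq1 : (1 : ℝ) - (1 / 2) ^ k < 1 := by
          have : (0 : ℝ) < (1 / 2) ^ k := by positivity
          linarith
        obtain ⟨p, hpε⟩ := exists_pow_lt_of_lt_one (half_pos hε) hq1
        have hpx := hp p
        rw [Metric.mem_closure_iff] at hpx
        push Not at hpx
        obtain ⟨η, hη, hfar⟩ := hpx
        obtain ⟨y, hy, hxy⟩ := Metric.mem_closure_iff.1 hx (min η (ε / 2))
          (lt_min hη (half_pos hε))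
        rcases stage_dichotomy k m w (t + 1) p hy with h | ⟨t', ht', z, hz, hyz⟩
        · exact absurd (hxy.trans_le (min_le_left _ _)) (not_lt.2 (hfar y h))
        · obtain rfl : t = t' := by omega
          refine ⟨z, hz, ?_⟩
          have h1 : dist x y < ε / 2 := hxy.trans_le (min_le_right _ _)
          have h2 : dist y z < ε / 2 := by
            rw [Real.dist_eq]
            exact hyz.trans_lt hpε
          linarith [dist_triangle x y z]

/-- The `k`CNF spectrum is a closed set of reals. -/
lemma isClosed_kcnfSpectrum (k : ℕ) : IsClosed (kcnfSpectrum k) := by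
  refine isClosed_of_closure_subset ((closure_mono ?_).trans
    (closure_stage_subset k k 0 (2 ^ (0 * 2))))
  rintro x ⟨φ, hφ, rfl⟩
  refine ⟨φ, ∅, hφ, by simp, fun c hc => ?_, card_wideCores_le φ ∅ k, rfl⟩
  exact (Finset.card_le_card Finset.sdiff_subset).trans
    (Finset.card_image_le.trans (hφ.2 c hc))

/-- **Kernel existence.** For every `k` and `δ ∈ [0,1]` there is a size `s` such
that every `k`CNF formula `φ` with `σ(φ) ≥ δ` admits a `k`CNF formula `κ` with at
most `s` clauses and `δ ≤ σ(κ) ≤ σ(φ)`. -/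
theorem kernel_exists (k : ℕ) (δ : ℝ) (h0 : 0 ≤ δ) (h1 : δ ≤ 1) :
    ∃ s : ℕ, ∀ φ : PCnf, IsKCnf k φ → satProb φ ≥ δ →
      ∃ κ : PCnf, IsKCnf k κ ∧ κ.card ≤ s ∧ δ ≤ satProb κ ∧ satProb κ ≤ satProb φ := by
  -- The least spectrum element that is at least `δ`, attained by `κ`.
  have hcomp : IsCompact (kcnfSpectrum k ∩ Set.Icc δ 1) :=
    isCompact_Icc.inter_left (isClosed_kcnfSpectrum k)
  have hne : (kcnfSpectrum k ∩ Set.Icc δ 1).Nonempty := by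
    refine ⟨1, ⟨∅, ⟨?_, ?_⟩, ?_⟩, h1, le_rfl⟩
    · intro c hc
      simp at hc
    · intro c hc
      simp at hc
    · simp [satProb, cnfVars, cnfSat, Finset.filter_singleton]
  obtain ⟨x, ⟨⟨κ, hκ, rfl⟩, hx⟩, hmin⟩ := hcomp.exists_isLeast hne
  refine ⟨κ.card, fun φ hφ hδ => ⟨κ, hκ, le_rfl, hx.1, hmin ⟨⟨φ, hφ, rfl⟩, hδ, ?_⟩⟩⟩
  rw [satProb, div_le_one (by positivity)]
  exact_mod_cast satCount_le φ
end
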